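/- Let K ⊂ ℝⁿ be compact and q_i > 0 on K for i = 1,…,N. If (μ_1,…,μ_N) is any N-tuple of finite Borel measures supported on K satisfying ∫_K q_1 dμ_1 = 1 and ∫_K x^α q_i dμ_i = ∫_K x^α q_1 dμ_1 for all α ∈ ℕⁿ and i = 2,…,N, then Σ_{i=1}^N ∫_K p_i dμ_i ≥ f*. In particular f̂ ≥ f*. -/

import Mathlib

/-!
Write `q₀` and `μ₀` for the first denominator and measure. The moment constraints say that the
measures `qᵢ μᵢ` and `q₀ μ₀` have the same moments. Since `K` is compact, polynomials are
uniformly dense in the continuous functions on `K` (`exists_mvPolynomial_near`), so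
`∫ h qᵢ dμᵢ = ∫ h q₀ dμ₀` for every `h` continuous on `K` (`integral_mul_eq_of_moments_eq`).
Taking `h = pᵢ / qᵢ` and summing over `i` gives
`∑ᵢ ∫ pᵢ dμᵢ = ∫ f q₀ dμ₀ ≥ f* ∫ q₀ dμ₀ = f*` (`fstar_le_of_feasible`), because `f ≥ f*` on `K`.
The bound on `f̂` follows because the given tuple makes the set of feasible values nonempty.
-/

open MeasureTheory MvPolynomial

/-- Stone–Weierstrass for polynomial functions on a compact subset of `ℝⁿ`. -/
lemma exists_mvPolynomial_near {n : ℕ} {K : Set (Fin n → ℝ)} (hK : IsCompact K)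
    {h : (Fin n → ℝ) → ℝ} (hh : ContinuousOn h K) {ε : ℝ} (hε : 0 < ε) :
    ∃ P : MvPolynomial (Fin n) ℝ, ∀ x ∈ K, |eval x P - h x| < ε := by
  have : CompactSpace K := isCompact_iff_compactSpace.mp hK
  let coord : Fin n → C(K, ℝ) := fun t => ⟨fun x => x.1 t, (continuous_apply t).comp continuous_subtype_val⟩
  let φ : MvPolynomial (Fin n) ℝ →ₐ[ℝ] C(K, ℝ) := aeval coord
  have hφ : ∀ (P : MvPolynomial (Fin n) ℝ) (x : K), φ P x = eval x.1 P := by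
    intro P x
    induction P using MvPolynomial.induction_on with
    | C a => simp [φ]
    | add P Q hP hQ => simp [hP, hQ]
    | mul_X P t hP => simp [hP]; left; simp [φ, coord]
  have hsep : φ.range.SeparatesPoints := by
    intro x y hxy
    obtain ⟨t, ht⟩ := Function.ne_iff.mp (fun e => hxy (Subtype.ext e))
    exact ⟨φ (X t), ⟨φ (X t), ⟨X t, rfl⟩, rfl⟩, by simpa [hφ] using ht⟩
  obtain ⟨⟨_, P, rfl⟩, hP⟩ :=
    ContinuousMap.exists_mem_subalgebra_near_continuous_of_separatesPoints φ.range hsep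
      (fun x : K => h x) (continuousOn_iff_continuous_domRestrict.mp hh) ε hε
  refine ⟨P, fun x hx => ?_⟩
  have := hP ⟨x, hx⟩
  rw [Real.norm_eq_abs] at this
  rw [← hφ P ⟨x, hx⟩]
  exact this

lemma integrable_of_continuousOn_of_supported {n : ℕ} {K : Set (Fin n → ℝ)} (hK : IsCompact K)
    {μ : Measure (Fin n → ℝ)} [IsFiniteMeasure μ] (hμ : μ Kᶜ = 0)
    {h : (Fin n → ℝ) → ℝ} (hh : ContinuousOn h K) : Integrable h μ := by
  have := hh.integrableOn_compact (μ := μ) hK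
  rwa [IntegrableOn, Measure.restrict_eq_self_of_ae_mem (s := K) (mem_ae_iff.mpr hμ)] at this

/-- Equality on monomials extends to polynomials by linearity. -/
lemma integral_eval_mul_eq_of_moments_eq {n : ℕ} {K : Set (Fin n → ℝ)} (hK : IsCompact K)
    {μ ν : Measure (Fin n → ℝ)} [IsFiniteMeasure μ] [IsFiniteMeasure ν]
    (hμ : μ Kᶜ = 0) (hν : ν Kᶜ = 0) (q r : MvPolynomial (Fin n) ℝ)
    (hmom : ∀ α : Fin n →₀ ℕ,
      ∫ x, (∏ t, x t ^ α t) * eval x q ∂μ = ∫ x, (∏ t, x t ^ α t) * eval x r ∂ν)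
    (P : MvPolynomial (Fin n) ℝ) :
    ∫ x, eval x P * eval x q ∂μ = ∫ x, eval x P * eval x r ∂ν := by
  have expand : ∀ (ρ : Measure (Fin n → ℝ)) [IsFiniteMeasure ρ] (s : MvPolynomial (Fin n) ℝ),
      ρ Kᶜ = 0 → ∫ x, eval x P * eval x s ∂ρ
        = ∑ α ∈ P.support, coeff α P * ∫ x, (∏ t, x t ^ α t) * eval x s ∂ρ := by
    intro ρ _ s hρ
    simp_rw [eval_eq' _ P, Finset.sum_mul, mul_assoc]
    rw [integral_finsetSum]
    · simp_rw [integral_const_mul]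
    · intro α _
      have := MvPolynomial.continuous_eval s
      exact integrable_of_continuousOn_of_supported hK hρ (by fun_prop)
  rw [expand μ q hμ, expand ν r hν]
  exact Finset.sum_congr rfl fun α _ => by rw [hmom α]

lemma abs_integral_mul_sub_le {n : ℕ} {K : Set (Fin n → ℝ)} (hK : IsCompact K)
    {μ : Measure (Fin n → ℝ)} [IsFiniteMeasure μ] (hμ : μ Kᶜ = 0)
    {q : MvPolynomial (Fin n) ℝ} (hq : ∀ x ∈ K, 0 < eval x q)
    {h : (Fin n → ℝ) → ℝ} (hh : ContinuousOn h K) {ε : ℝ} {P : MvPolynomial (Fin n) ℝ}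
    (hP : ∀ x ∈ K, |eval x P - h x| < ε) :
    |∫ x, eval x P * eval x q ∂μ - ∫ x, h x * eval x q ∂μ| ≤ ε * ∫ x, eval x q ∂μ := by
  have cP := (MvPolynomial.continuous_eval P).continuousOn (s := K)
  have cq := (MvPolynomial.continuous_eval q).continuousOn (s := K)
  have iP : Integrable (fun x => eval x P * eval x q) μ :=
    integrable_of_continuousOn_of_supported hK hμ (cP.mul cq)
  have ih : Integrable (fun x => h x * eval x q) μ :=
    integrable_of_continuousOn_of_supported hK hμ (hh.mul cq)
  rw [← integral_sub iP ih, ← integral_const_mul, ← Real.norm_eq_abs]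
  refine norm_integral_le_of_norm_le
    ((integrable_of_continuousOn_of_supported hK hμ cq).const_mul ε) ?_
  filter_upwards [show ∀ᵐ x ∂μ, x ∈ K from mem_ae_iff.mpr hμ] with x hx
  rw [← sub_mul, norm_mul, Real.norm_eq_abs, Real.norm_eq_abs, abs_of_pos (hq x hx)]
  exact mul_le_mul_of_nonneg_right (hP x hx).le (hq x hx).le

/-- Two weighted measures on a compact set with the same moments integrate every continuous
function in the same way. -/
lemma integral_mul_eq_of_moments_eq {n : ℕ} {K : Set (Fin n → ℝ)} (hK : IsCompact K)
    {μ ν : Measure (Fin n → ℝ)} [IsFiniteMeasure μ] [IsFiniteMeasure ν]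
    (hμ : μ Kᶜ = 0) (hν : ν Kᶜ = 0) {q r : MvPolynomial (Fin n) ℝ}
    (hq : ∀ x ∈ K, 0 < eval x q) (hr : ∀ x ∈ K, 0 < eval x r)
    (hmass : ∫ x, eval x r ∂ν = 1)
    (hmom : ∀ α : Fin n →₀ ℕ,
      ∫ x, (∏ t, x t ^ α t) * eval x q ∂μ = ∫ x, (∏ t, x t ^ α t) * eval x r ∂ν)
    {h : (Fin n → ℝ) → ℝ} (hh : ContinuousOn h K) :
    ∫ x, h x * eval x q ∂μ = ∫ x, h x * eval x r ∂ν := by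
  have hmass' : ∫ x, eval x q ∂μ = 1 := by simpa [hmass] using hmom 0
  refine eq_of_forall_dist_le fun ε hε => ?_
  obtain ⟨P, hP⟩ := exists_mvPolynomial_near hK hh (half_pos hε)
  have h1 := abs_integral_mul_sub_le hK hμ hq hh hP
  have h2 := abs_integral_mul_sub_le hK hν hr hh hP
  rw [hmass', mul_one, abs_le] at h1
  rw [hmass, mul_one, abs_le, ← integral_eval_mul_eq_of_moments_eq hK hμ hν q r hmom P] at h2
  rw [Real.dist_eq, abs_le]
  constructor <;> linarith [h1.1, h1.2, h2.1, h2.2]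

/-- The objective value of a feasible tuple is `∫ f q₀ dμ₀`, hence at least `f*`. -/
lemma fstar_le_of_feasible {n N : ℕ} (hN : 0 < N) {K : Set (Fin n → ℝ)} (hK : IsCompact K)
    (p q : Fin N → MvPolynomial (Fin n) ℝ) (hq : ∀ i, ∀ x ∈ K, 0 < eval x (q i))
    (μ : Fin N → Measure (Fin n → ℝ)) (hfin : ∀ i, IsFiniteMeasure (μ i))
    (hsupp : ∀ i, μ i Kᶜ = 0)
    (hmass : (∫ x, eval x (q ⟨0, hN⟩) ∂(μ ⟨0, hN⟩)) = 1)
    (hmom : ∀ i, ∀ α : Fin n →₀ ℕ,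
      ∫ x, (∏ t, x t ^ α t) * eval x (q i) ∂(μ i)
        = ∫ x, (∏ t, x t ^ α t) * eval x (q ⟨0, hN⟩) ∂(μ ⟨0, hN⟩)) :
    sInf ((fun x => ∑ i, eval x (p i) / eval x (q i)) '' K)
      ≤ ∑ i, ∫ x, eval x (p i) ∂(μ i) := by
  have cp : ∀ i, ContinuousOn (fun x => eval x (p i)) K :=
    fun i => (MvPolynomial.continuous_eval (p i)).continuousOn
  have cq : ∀ i, ContinuousOn (fun x => eval x (q i)) K :=
    fun i => (MvPolynomial.continuous_eval (q i)).continuousOn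
  have cdiv : ∀ i, ContinuousOn (fun x => eval x (p i) / eval x (q i)) K :=
    fun i => (cp i).div (cq i) fun x hx => (hq i x hx).ne'
  have transfer : ∀ i, ∫ x, eval x (p i) ∂(μ i)
      = ∫ x, eval x (p i) / eval x (q i) * eval x (q ⟨0, hN⟩) ∂(μ ⟨0, hN⟩) := by
    intro i
    rw [← integral_mul_eq_of_moments_eq hK (hsupp i) (hsupp _) (hq i) (hq _) hmass (hmom i)
      (cdiv i)]
    refine integral_congr_ae ?_
    filter_upwards [show ∀ᵐ x ∂(μ i), x ∈ K from mem_ae_iff.mpr (hsupp i)] with x hx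
    rw [div_mul_cancel₀ _ (hq i x hx).ne']
  have integrable_term : ∀ i, Integrable
      (fun x => eval x (p i) / eval x (q i) * eval x (q ⟨0, hN⟩)) (μ ⟨0, hN⟩) :=
    fun i => integrable_of_continuousOn_of_supported hK (hsupp _) ((cdiv i).mul (cq _))
  have bdd : BddBelow ((fun x => ∑ i, eval x (p i) / eval x (q i)) '' K) :=
    hK.bddBelow_image (continuousOn_finsetSum _ fun i _ => cdiv i)
  rw [Finset.sum_congr rfl fun i _ => transfer i, ← integral_finsetSum _ fun i _ =>
    integrable_term i]
  conv_lhs => rw [← mul_one (sInf _), ← hmass, ← integral_const_mul]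
  refine integral_mono_ae
    ((integrable_of_continuousOn_of_supported hK (hsupp _) (cq _)).const_mul _)
    (integrable_finsetSum _ fun i _ => integrable_term i) ?_
  filter_upwards [show ∀ᵐ x ∂(μ ⟨0, hN⟩), x ∈ K from mem_ae_iff.mpr (hsupp _)] with x hx
  rw [← Finset.sum_mul]
  exact mul_le_mul_of_nonneg_right (csInf_le bdd ⟨x, hx, rfl⟩) (hq _ x hx).le

/-- **Every feasible solution of the GMP dominates the global minimum.**
Let `K ⊆ ℝⁿ` be compact and `qᵢ > 0` on `K`.  If `(μ₁,…,μ_N)` is any `N`-tuple of finite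
Borel measures supported on `K` satisfying the moment constraints of the generalized
moment problem, then `Σᵢ ∫_K pᵢ dμᵢ ≥ f*`; in particular `f̂ ≥ f*`. -/
theorem gmp_feasible_ge_fstar
    (n N m : ℕ) (hN : 0 < N)
    (g : Fin m → MvPolynomial (Fin n) ℝ)
    (K : Set (Fin n → ℝ))
    (hK : K = {x | ∀ j, 0 ≤ eval x (g j)})
    (hKcpt : IsCompact K)
    (p q : Fin N → MvPolynomial (Fin n) ℝ)
    (hqpos : ∀ i, ∀ x ∈ K, 0 < eval x (q i))
    (f : (Fin n → ℝ) → ℝ)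
    (hf : f = fun x => ∑ i, eval x (p i) / eval x (q i))
    (fstar : ℝ)
    (hfstar : fstar = sInf (f '' K))
    (fhat : ℝ)
    (hfhat : fhat = sInf {v : ℝ |
      ∃ μ : Fin N → Measure (Fin n → ℝ),
        (∀ i, IsFiniteMeasure (μ i)) ∧
        (∀ i, μ i Kᶜ = 0) ∧
        (∫ x, eval x (q ⟨0, hN⟩) ∂(μ ⟨0, hN⟩)) = 1 ∧
        (∀ i, ∀ α : Fin n →₀ ℕ,
          ∫ x, (∏ t, x t ^ α t) * eval x (q i) ∂(μ i)
            = ∫ x, (∏ t, x t ^ α t) * eval x (q ⟨0, hN⟩) ∂(μ ⟨0, hN⟩)) ∧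
        v = ∑ i, ∫ x, eval x (p i) ∂(μ i)})
    (μ : Fin N → Measure (Fin n → ℝ))
    (hfin : ∀ i, IsFiniteMeasure (μ i))
    (hsupp : ∀ i, μ i Kᶜ = 0)
    (hmass : (∫ x, eval x (q ⟨0, hN⟩) ∂(μ ⟨0, hN⟩)) = 1)
    (hmom : ∀ i, ∀ α : Fin n →₀ ℕ,
      ∫ x, (∏ t, x t ^ α t) * eval x (q i) ∂(μ i)
        = ∫ x, (∏ t, x t ^ α t) * eval x (q ⟨0, hN⟩) ∂(μ ⟨0, hN⟩)) :
    fstar ≤ ∑ i, ∫ x, eval x (p i) ∂(μ i) ∧ fstar ≤ fhat := by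
  subst hf hfstar hfhat
  refine ⟨fstar_le_of_feasible hN hKcpt p q hqpos μ hfin hsupp hmass hmom, ?_⟩
  refine le_csInf ⟨_, μ, hfin, hsupp, hmass, hmom, rfl⟩ ?_
  rintro _ ⟨ν, hfin', hsupp', hmass', hmom', rfl⟩
  exact fstar_le_of_feasible hN hKcpt p q hqpos ν hfin' hsupp' hmass' hmom'
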